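/- arXiv:2401.08065 — 2 statements merged into one kernel-verified Lean document; each statement's English description precedes it below -/
import Mathlib

section
/- Let ρ = |ψ⟩⟨ψ| be an n-qubit pure state and S ⊆ Fin n nonempty with |S| = s. Fix a bitstring z : S → Fin 2 and let U = ⊗_{i∈S} U_i be a product of independent Haar-random elements of U(2), with P_U(z) = tr(U ρ U† |z⟩⟨z|). Then E_U[P_U(z)³] = 4^{−s} · tr( ρ⊗ρ⊗ρ · ∏_{i∈S} Π_{sym,3}^i ) ≤ 4^{−s}, where Π_{sym,3} = (1/6) Σ_{σ ∈ S₃} R_σ is the projector onto the symmetric subspace of (C²)^{⊗3} (R_σ being the operator permuting the three tensor factors according to σ) and Π_{sym,3}^i acts as Π_{sym,3} on the triple of i-th qubits of the three copies and as the identity elsewhere. Consequently Σ_{z ∈ {0,1}^S} E_U[P_U(z)³] ≤ 2^{−s}. -/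
open Matrix MeasureTheory
open scoped BigOperators ComplexConjugate Kronecker

/-- `n`-qubit operators: matrices indexed by functions `Fin n → Fin 2`. -/
abbrev QMat (n : ℕ) : Type := Matrix (Fin n → Fin 2) (Fin n → Fin 2) ℂ

/-- Combine an assignment on `α` and one on its complement into a full index. -/
noncomputable def embedIdx {n : ℕ} (α : Finset (Fin n)) (i : {x : Fin n // x ∈ α} → Fin 2)
    (k : {x : Fin n // x ∉ α} → Fin 2) : Fin n → Fin 2 :=
  fun x => if h : x ∈ α then i ⟨x, h⟩ else k ⟨x, h⟩

/-- The reduced density matrix on the qubits in `α` (partial trace over the rest). -/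
noncomputable def reduced {n : ℕ} (ρ : QMat n) (α : Finset (Fin n)) :
    Matrix ({x : Fin n // x ∈ α} → Fin 2) ({x : Fin n // x ∈ α} → Fin 2) ℂ :=
  fun i j => ∑ k : ({x : Fin n // x ∉ α} → Fin 2), ρ (embedIdx α i k) (embedIdx α j k)

/-- The concentratable entanglement `C_ψ(S) = 1 - 2^{-|S|} ∑_{α ⊆ S} tr(ρ_α²)`. -/
noncomputable def CE {n : ℕ} (ρ : QMat n) (S : Finset (Fin n)) : ℝ :=
  1 - (1 / 2 : ℝ) ^ S.card *
    ∑ α ∈ S.powerset, (Matrix.trace (reduced ρ α * reduced ρ α)).re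

/-- Tensor product of single-qubit operators on the qubits in `S`, identity elsewhere. -/
noncomputable def localOp {n : ℕ} (S : Finset (Fin n))
    (V : {i : Fin n // i ∈ S} → Matrix (Fin 2) (Fin 2) ℂ) : QMat n :=
  fun x y => ∏ i : Fin n,
    if h : i ∈ S then V ⟨i, h⟩ (x i) (y i)
    else (if x i = y i then 1 else 0)

/-- Projector onto computational basis state `z` on the qubits in `S`, identity elsewhere. -/
noncomputable def projZ {n : ℕ} (S : Finset (Fin n)) (z : {i : Fin n // i ∈ S} → Fin 2) : QMat n :=
  fun x y => ∏ i : Fin n,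
    if h : i ∈ S then (if x i = z ⟨i, h⟩ ∧ y i = z ⟨i, h⟩ then 1 else 0)
    else (if x i = y i then 1 else 0)

noncomputable instance : MeasurableSpace (Matrix.unitaryGroup (Fin 2) ℂ) := borel _
instance : BorelSpace (Matrix.unitaryGroup (Fin 2) ℂ) := ⟨rfl⟩

/-- The Born probability `P_U(z) = tr(U ρ U† |z⟩⟨z|)` of outcome `z` after the local
randomized measurement given by the single-qubit unitaries `V i`, `i ∈ S`. -/
noncomputable def born {n : ℕ} (ρ : QMat n) (S : Finset (Fin n))
    (V : {i : Fin n // i ∈ S} → Matrix.unitaryGroup (Fin 2) ℂ)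
    (z : {i : Fin n // i ∈ S} → Fin 2) : ℝ :=
  (Matrix.trace (localOp S (fun i => (V i : Matrix (Fin 2) (Fin 2) ℂ)) * ρ *
      (localOp S (fun i => (V i : Matrix (Fin 2) (Fin 2) ℂ)))ᴴ * projZ S z)).re

/-- The three-fold tensor copy `ρ ⊗ ρ ⊗ ρ`, indexed by triples of basis labels. -/
noncomputable def rho3 {n : ℕ} (ρ : QMat n) :
    Matrix (Fin 3 → (Fin n → Fin 2)) (Fin 3 → (Fin n → Fin 2)) ℂ :=
  fun x y => ∏ c : Fin 3, ρ (x c) (y c)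

/-- The operator permuting the three tensor factors of `(ℂ²)^{⊗3}` according to `σ`. -/
noncomputable def permOp3 (σ : Equiv.Perm (Fin 3)) : Matrix (Fin 3 → Fin 2) (Fin 3 → Fin 2) ℂ :=
  fun a b => if ∀ c, a c = b (σ c) then 1 else 0

/-- The projector `Π_{sym,3} = (1/6) ∑_{σ ∈ S₃} R_σ` onto the symmetric subspace of `(ℂ²)^{⊗3}`. -/
noncomputable def sym3 : Matrix (Fin 3 → Fin 2) (Fin 3 → Fin 2) ℂ :=
  ((1 : ℂ) / 6) • ∑ σ : Equiv.Perm (Fin 3), permOp3 σ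

/-- `Π_{sym,3}^i`: `Π_{sym,3}` acting on the triple of `i`-th qubits of the three copies,
identity elsewhere. -/
noncomputable def symAt3 {n : ℕ} (i : Fin n) :
    Matrix (Fin 3 → (Fin n → Fin 2)) (Fin 3 → (Fin n → Fin 2)) ℂ :=
  fun x y => if ∀ (c : Fin 3) (j : Fin n), j ≠ i → x c j = y c j
    then sym3 (fun c => x c i) (fun c => y c i) else 0

/-- The product `∏_{i ∈ S} Π_{sym,3}^i` (the factors commute; we use the increasing order). -/
noncomputable def prodSym3 {n : ℕ} (S : Finset (Fin n)) :
    Matrix (Fin 3 → (Fin n → Fin 2)) (Fin 3 → (Fin n → Fin 2)) ℂ :=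
  ((S.sort (· ≤ ·)).map (fun i => symAt3 i)).prod

/-!
Write `E_U = U† |z⟩⟨z| U` for a single qubit. Right invariance of Haar measure makes the quadratic
form of `𝔼_U[E_U^{⊗k}]` at a product vector `v ⊗ ⋯ ⊗ v` depend on `v` only through `‖v‖`, so it is a
multiple of `‖v‖^{2k}`. By polarization an operator that absorbs permutations of the tensor factors
is determined by these values, hence `𝔼_U[E_U^{⊗k}]` is a multiple of the symmetric projector. Its
trace is `1`, so the multiple is the inverse of `tr Π_sym`, which is `1 / 4` for three qubits.
Independence turns this into the product over the qubits in `S`, and the bounds follow because that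
product is again an orthogonal projection.
-/

open scoped ComplexOrder

section PiTensor

variable {ι R : Type*} {l m n : ι → Type*} [Fintype ι] [CommSemiring R]

/-- The tensor product `⨂ᵢ Aᵢ` of a finite family of matrices, with rows and columns indexed by
dependent functions rather than by iterated pairs. -/
def piTensor (A : ∀ i, Matrix (m i) (n i) R) : Matrix (∀ i, m i) (∀ i, n i) R :=
  Matrix.of fun x y => ∏ i, A i (x i) (y i)

theorem piTensor_apply (A : ∀ i, Matrix (m i) (n i) R) (x : ∀ i, m i) (y : ∀ i, n i) :
    piTensor A x y = ∏ i, A i (x i) (y i) :=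
  rfl

theorem piTensor_one [∀ i, DecidableEq (m i)] :
    piTensor (fun i => (1 : Matrix (m i) (m i) R)) = 1 := by
  ext x y
  simp only [piTensor_apply, Matrix.one_apply, funext_iff, Fintype.prod_ite_zero,
    Finset.prod_const_one]

theorem piTensor_mul [DecidableEq ι] [∀ i, Fintype (m i)] (A : ∀ i, Matrix (l i) (m i) R)
    (B : ∀ i, Matrix (m i) (n i) R) :
    piTensor A * piTensor B = piTensor fun i => A i * B i := by
  ext x y
  simp only [piTensor_apply, Matrix.mul_apply, Fintype.prod_sum, Finset.prod_mul_distrib]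

theorem piTensor_conjTranspose [StarRing R] (A : ∀ i, Matrix (m i) (n i) R) :
    (piTensor A)ᴴ = piTensor fun i => (A i)ᴴ := by
  ext x y
  simp only [piTensor_apply, Matrix.conjTranspose_apply, star_prod]

theorem trace_piTensor [DecidableEq ι] [∀ i, Fintype (m i)] (A : ∀ i, Matrix (m i) (m i) R) :
    (piTensor A).trace = ∏ i, (A i).trace := by
  simp only [Matrix.trace, Matrix.diag_apply, piTensor_apply, Fintype.prod_sum]

theorem isStarProjection_piTensor [DecidableEq ι] [∀ i, Fintype (m i)] [StarRing R]
    {A : ∀ i, Matrix (m i) (m i) R} (hA : ∀ i, IsStarProjection (A i)) :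
    IsStarProjection (piTensor A) where
  isIdempotentElem := by
    simp only [IsIdempotentElem, piTensor_mul, (hA _).isIdempotentElem.eq]
  isSelfAdjoint :=
    (piTensor_conjTranspose A).trans <| congrArg piTensor <|
      funext fun i => (hA i).isSelfAdjoint.star_eq

theorem piTensor_comm {κ : Type*} [Fintype κ] (A : κ → ∀ i, Matrix (m i) (n i) R) :
    piTensor (fun c => piTensor (A c)) = (piTensor fun i => piTensor fun c => A c i).submatrix
      (Equiv.piComm fun _ i => m i) (Equiv.piComm fun _ i => n i) := by
  ext x y
  exact Finset.prod_comm

theorem posSemidef_piTensor {𝕜 : Type*} [RCLike 𝕜] [∀ i, Finite (m i)]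
    {A : ∀ i, Matrix (m i) (m i) 𝕜} (hA : ∀ i, (A i).PosSemidef) : (piTensor A).PosSemidef := by
  classical
  have := fun i => Fintype.ofFinite (m i)
  open scoped MatrixOrder in
  choose B hB using fun i => CStarAlgebra.nonneg_iff_eq_star_mul_self.mp (hA i).nonneg
  obtain rfl : A = fun i => (B i)ᴴ * B i := funext hB
  rw [← piTensor_mul, ← piTensor_conjTranspose]
  exact Matrix.posSemidef_conjTranspose_mul_self _

end PiTensor

theorem isStarProjection_submatrix {m n R : Type*} [Fintype m] [Fintype n] [Semiring R]
    [StarRing R] {P : Matrix n n R} (hP : IsStarProjection P) (e : m ≃ n) :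
    IsStarProjection (P.submatrix e e) where
  isIdempotentElem := by
    rw [IsIdempotentElem, Matrix.submatrix_mul_equiv, hP.isIdempotentElem.eq]
  isSelfAdjoint := by
    rw [IsSelfAdjoint, star_eq_conjTranspose, Matrix.conjTranspose_submatrix,
      ← star_eq_conjTranspose, hP.isSelfAdjoint.star_eq]

theorem trace_mul_le_trace {n 𝕜 : Type*} [Fintype n] [RCLike 𝕜]
    {A P : Matrix n n 𝕜} (hA : A.PosSemidef) (hP : IsStarProjection P) :
    (A * P).trace ≤ A.trace := by
  classical
  have hQ := hP.one_sub
  have hcompress : (A * (1 - P)).trace = ((1 - P)ᴴ * A * (1 - P)).trace := by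
    rw [← star_eq_conjTranspose, hQ.isSelfAdjoint.star_eq, Matrix.trace_mul_cycle,
      hQ.isIdempotentElem.eq, Matrix.trace_mul_comm]
  have hnonneg := (hA.conjTranspose_mul_mul_same (1 - P)).trace_nonneg
  rwa [← hcompress, mul_sub, mul_one, Matrix.trace_sub, sub_nonneg] at hnonneg

section TensorPow

variable {ι κ R : Type*} [Fintype ι]

/-- The product vector `v ⊗ ⋯ ⊗ v`, with one factor for each element of `ι`. -/
def tensorPow (ι : Type*) [Fintype ι] [CommMonoid R] (v : κ → R) : (ι → κ) → R :=
  fun x => ∏ c, v (x c)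

theorem tensorPow_comp_perm [CommMonoid R] (v : κ → R) (x : ι → κ) (σ : Equiv.Perm ι) :
    tensorPow ι v (x ∘ σ) = tensorPow ι v x :=
  Equiv.prod_comp σ fun c => v (x c)

theorem piTensor_vecMulVec [CommSemiring R] (u v : κ → R) :
    piTensor (fun _ : ι => vecMulVec u v) = vecMulVec (tensorPow ι u) (tensorPow ι v) := by
  ext x y
  simp only [piTensor_apply, vecMulVec_apply, tensorPow, Finset.prod_mul_distrib]

theorem tensorPow_dotProduct_tensorPow [Fintype κ] [DecidableEq ι] [CommSemiring R]
    (u v : κ → R) : tensorPow ι u ⬝ᵥ tensorPow ι v = (u ⬝ᵥ v) ^ Fintype.card ι := by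
  simp only [tensorPow, dotProduct, ← Finset.prod_mul_distrib, ← Finset.card_univ,
    ← Finset.prod_const, Fintype.prod_sum]

theorem piTensor_mulVec_tensorPow [Fintype κ] [DecidableEq ι] [CommSemiring R]
    (A : Matrix κ κ R) (v : κ → R) :
    piTensor (fun _ : ι => A) *ᵥ tensorPow ι v = tensorPow ι (A *ᵥ v) := by
  ext x
  simp only [mulVec, dotProduct, piTensor_apply, tensorPow, ← Finset.prod_mul_distrib,
    Fintype.prod_sum]

end TensorPow

section SymProj

variable {ι κ R : Type*} [Fintype ι] [DecidableEq κ]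

/-- The operator `R_σ` on `(R^κ)^{⊗ι}` permuting the tensor factors according to `σ`. -/
def permOp (κ R : Type*) [DecidableEq κ] [Zero R] [One R] (σ : Equiv.Perm ι) :
    Matrix (ι → κ) (ι → κ) R :=
  Matrix.of fun x y => if x = y ∘ σ then 1 else 0

theorem permOp_apply_comp_perm [Zero R] [One R] (ρ σ τ : Equiv.Perm ι) (x y : ι → κ) :
    permOp κ R ρ (x ∘ σ) (y ∘ τ) = permOp κ R (τ * ρ * σ⁻¹) x y :=
  if_congr (Equiv.eq_comp_symm σ x (y ∘ τ ∘ ρ)).symm rfl rfl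

theorem permOp_conjTranspose [Semiring R] [StarRing R] (σ : Equiv.Perm ι) :
    (permOp κ R σ)ᴴ = permOp κ R σ⁻¹ := by
  ext x y
  simp only [permOp, conjTranspose_apply, of_apply, apply_ite star, star_one, star_zero]
  exact if_congr (eq_comm.trans (Equiv.eq_comp_symm σ x y).symm) rfl rfl

variable [DecidableEq ι]

theorem permOp_mulVec [Fintype κ] [Semiring R] (σ : Equiv.Perm ι)
    (v : (ι → κ) → R) (x : ι → κ) : (permOp κ R σ *ᵥ v) x = v (x ∘ σ.symm) := by
  have h (y : ι → κ) : x = y ∘ σ ↔ x ∘ σ.symm = y := (Equiv.comp_symm_eq σ y x).symm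
  simp [permOp, mulVec, dotProduct, h]

/-- The projector `Π_sym = (1 / |ι|!) ∑_σ R_σ` onto the symmetric subspace of `(R^κ)^{⊗ι}`. -/
def symProj (ι κ R : Type*) [Fintype ι] [DecidableEq ι] [DecidableEq κ] [DivisionRing R] :
    Matrix (ι → κ) (ι → κ) R :=
  ((Fintype.card ι).factorial : R)⁻¹ • ∑ σ : Equiv.Perm ι, permOp κ R σ

theorem symProj_apply_comp_perm [DivisionRing R] (σ τ : Equiv.Perm ι) (x y : ι → κ) :
    symProj ι κ R (x ∘ σ) (y ∘ τ) = symProj ι κ R x y := by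
  simp only [symProj, Matrix.smul_apply, Matrix.sum_apply, permOp_apply_comp_perm]
  rw [← Equiv.sum_comp ((Equiv.mulLeft τ).trans (Equiv.mulRight σ⁻¹)) (permOp κ R · x y)]
  rfl

theorem symProj_conjTranspose [Field R] [StarRing R] : (symProj ι κ R)ᴴ = symProj ι κ R := by
  rw [symProj, conjTranspose_smul, conjTranspose_sum, star_inv₀, star_natCast,
    ← Equiv.sum_comp (Equiv.inv (Equiv.Perm ι))]
  simp only [permOp_conjTranspose, Equiv.inv_apply, inv_inv]

variable [Fintype κ]

theorem symProj_mulVec_of_comp_perm [DivisionRing R] [CharZero R] {v : (ι → κ) → R}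
    (hv : ∀ (σ : Equiv.Perm ι) x, v (x ∘ σ) = v x) : symProj ι κ R *ᵥ v = v := by
  have hcard : ((Fintype.card ι).factorial : R) ≠ 0 :=
    Nat.cast_ne_zero.mpr (Nat.factorial_ne_zero _)
  have hperm (σ : Equiv.Perm ι) : permOp κ R σ *ᵥ v = v :=
    funext fun x => (permOp_mulVec σ v x).trans (hv σ.symm x)
  rw [symProj, smul_mulVec, sum_mulVec, Finset.sum_congr rfl fun σ _ => hperm σ,
    Finset.sum_const, Finset.card_univ, Fintype.card_perm, ← Nat.cast_smul_eq_nsmul R,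
    smul_smul, inv_mul_cancel₀ hcard, one_smul]

theorem isStarProjection_symProj [Field R] [CharZero R] [StarRing R] :
    IsStarProjection (symProj ι κ R) where
  isIdempotentElem := by
    ext x y
    exact congrFun (symProj_mulVec_of_comp_perm fun σ w => symProj_apply_comp_perm σ 1 w y) x
  isSelfAdjoint := symProj_conjTranspose

end SymProj

section Polarization

theorem exists_perm_eq_comp {ι κ : Type*} [Fintype ι] [DecidableEq κ] {x y : ι → κ}
    (h : ∀ j, Fintype.card {c // x c = j} = Fintype.card {c // y c = j}) :
    ∃ σ : Equiv.Perm ι, x = y ∘ σ :=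
  ⟨Equiv.ofFiberEquiv fun j => Fintype.equivOfCardEq (h j),
    funext fun c => (Equiv.ofFiberEquiv_map _ c).symm⟩

theorem mvPolynomial_eq_zero_of_eval_ofReal {σ : Type*} {p : MvPolynomial σ ℂ}
    (hp : ∀ w : σ → ℝ, MvPolynomial.eval (fun i => (w i : ℂ)) p = 0) : p = 0 := by
  refine MvPolynomial.funext_set (fun _ => Set.range ((↑) : ℝ → ℂ))
    (fun _ => Set.infinite_range_of_injective Complex.ofReal_injective) fun w hw => ?_
  choose r hr using fun i => hw i (Set.mem_univ i)
  obtain rfl : (fun i => (r i : ℂ)) = w := funext hr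
  rw [hp, map_zero]

theorem mvPolynomial_eq_zero_of_eval_star {κ : Type*} {p : MvPolynomial (κ ⊕ κ) ℂ}
    (hp : ∀ v : κ → ℂ, MvPolynomial.eval (Sum.elim (star v) v) p = 0) : p = 0 := by
  let L (w : κ ⊕ κ → ℂ) : κ ⊕ κ → ℂ := Sum.elim
    (fun j => w (.inl j) - Complex.I * w (.inr j)) fun j => w (.inl j) + Complex.I * w (.inr j)
  let q : MvPolynomial (κ ⊕ κ) ℂ := MvPolynomial.bind₁ (Sum.elim
    (fun j => .X (.inl j) - .C Complex.I * .X (.inr j))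
    fun j => .X (.inl j) + .C Complex.I * .X (.inr j)) p
  have eval_q (w : κ ⊕ κ → ℂ) : MvPolynomial.eval w q = MvPolynomial.eval (L w) p := by
    simp only [q, MvPolynomial.eval, MvPolynomial.eval₂Hom_bind₁]
    congr 2
    ext (j | j) <;> simp [L]
  have hq : q = 0 := mvPolynomial_eq_zero_of_eval_ofReal fun w => by
    rw [eval_q, ← hp fun j => w (.inl j) + Complex.I * w (.inr j)]
    congr 2
    ext (j | j) <;> simp [L, sub_eq_add_neg]
  refine MvPolynomial.funext fun w => ?_
  obtain ⟨w', rfl⟩ : ∃ w', L w' = w := by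
    refine ⟨Sum.elim (fun j => (w (.inl j) + w (.inr j)) / 2)
      fun j => Complex.I * (w (.inl j) - w (.inr j)) / 2, ?_⟩
    ext (j | j) <;> simp only [L, Sum.elim_inl, Sum.elim_inr]
    · linear_combination -(w (.inl j) - w (.inr j)) / 2 * Complex.I_mul_I
    · linear_combination (w (.inl j) - w (.inr j)) / 2 * Complex.I_mul_I
  rw [← eval_q, hq, map_zero, map_zero]

theorem eq_zero_of_tensorPow_dotProduct_mulVec {ι κ : Type*} [Fintype ι] [Fintype κ]
    [DecidableEq ι] {D : Matrix (ι → κ) (ι → κ) ℂ}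
    (hperm : ∀ (σ τ : Equiv.Perm ι) x y, D (x ∘ σ) (y ∘ τ) = D x y)
    (hform : ∀ v : κ → ℂ, tensorPow ι (star v) ⬝ᵥ D *ᵥ tensorPow ι v = 0) : D = 0 := by
  classical
  let e (x y : ι → κ) : κ ⊕ κ →₀ ℕ := ∑ c : ι ⊕ ι, Finsupp.single (Sum.map x y c) 1
  let p : MvPolynomial (κ ⊕ κ) ℂ := ∑ x, ∑ y, MvPolynomial.monomial (e x y) (D x y)
  have hp : p = 0 := mvPolynomial_eq_zero_of_eval_star fun v => by
    rw [← hform v]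
    simp only [p, e, MvPolynomial.monomial_sum_index, map_sum, map_mul, map_prod,
      MvPolynomial.eval_C, Fintype.prod_sum_type, dotProduct, mulVec, tensorPow, Finset.mul_sum]
    refine Finset.sum_congr rfl fun x _ => Finset.sum_congr rfl fun y _ => ?_
    simp only [Sum.map_inl, Sum.map_inr, MvPolynomial.eval_monomial, Sum.elim_inl, Sum.elim_inr,
      pow_zero, Finsupp.prod_single_index, pow_one, one_mul]
    ring
  have he {x y x' y' : ι → κ} (h : e x y = e x' y') : D x y = D x' y' := by
    obtain ⟨σ, rfl⟩ : ∃ σ : Equiv.Perm ι, x = x' ∘ σ := exists_perm_eq_comp fun j => by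
      simpa [e, Finsupp.single_apply, Fintype.card_subtype] using DFunLike.congr_fun h (.inl j)
    obtain ⟨τ, rfl⟩ : ∃ τ : Equiv.Perm ι, y = y' ∘ τ := exists_perm_eq_comp fun j => by
      simpa [e, Finsupp.single_apply, Fintype.card_subtype] using DFunLike.congr_fun h (.inr j)
    exact hperm σ τ x' y'
  ext x y
  have hcount : p.coeff (e x y) =
      ({w : (ι → κ) × (ι → κ) | e w.1 w.2 = e x y} : Finset _).card • D x y := by
    rw [← Finset.sum_const, Finset.sum_filter, Fintype.sum_prod_type]
    simp only [p, MvPolynomial.coeff_sum, MvPolynomial.coeff_monomial]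
    exact Finset.sum_congr rfl fun x' _ => Finset.sum_congr rfl fun y' _ =>
      if_ctx_congr Iff.rfl he fun _ => rfl
  rw [hp, MvPolynomial.coeff_zero, eq_comm, smul_eq_zero] at hcount
  refine hcount.resolve_left (Finset.card_ne_zero_of_mem (a := (x, y)) ?_)
  exact Finset.mem_filter.mpr ⟨Finset.mem_univ _, rfl⟩

end Polarization

section UnitaryGroup

instance {d 𝕜 : Type*} [Fintype d] [DecidableEq d] [RCLike 𝕜] :
    CompactSpace (unitaryGroup d 𝕜) := by
  have hball : IsCompact (X := Matrix d d 𝕜)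
      (Set.univ.pi fun _ => Set.univ.pi fun _ => Metric.closedBall 0 1) :=
    isCompact_univ_pi fun _ => isCompact_univ_pi fun _ => isCompact_closedBall 0 1
  refine isCompact_iff_compactSpace.mp (hball.of_isClosed_subset isClosed_unitary ?_)
  exact fun U hU i _ j _ => mem_closedBall_zero_iff.mpr (entry_norm_bound_of_unitary hU i j)

theorem isMulRightInvariant_of_isHaarMeasure {G : Type*} [Group G] [TopologicalSpace G]
    [IsTopologicalGroup G] [LocallyCompactSpace G] [MeasurableSpace G] [BorelSpace G]
    (μ : Measure G) [μ.IsHaarMeasure] [IsProbabilityMeasure μ] : μ.IsMulRightInvariant where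
  map_mul_right_eq_self g := by
    have : IsProbabilityMeasure (μ.map (· * g)) :=
      Measure.isProbabilityMeasure_map (continuous_mul_const g).aemeasurable
    exact Measure.isHaarMeasure_eq_of_isProbabilityMeasure _ _

variable {d : Type*} [Fintype d] [DecidableEq d]

theorem exists_unitary_mulVec_single_eq {𝕜 : Type*} [RCLike 𝕜] (j : d) (v : d → 𝕜) :
    ∃ W ∈ unitaryGroup d 𝕜, ∃ r : 𝕜, W *ᵥ Pi.single j r = v := by
  let b := EuclideanSpace.basisFun d 𝕜
  let u : EuclideanSpace 𝕜 d := WithLp.toLp 2 v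
  obtain hu | hu := eq_or_ne u 0
  · refine ⟨1, one_mem _, 0, ?_⟩
    rw [Pi.single_zero, mulVec_zero]
    exact (congrArg WithLp.ofLp hu).symm
  have hunit : Orthonormal 𝕜 (({j} : Set d).domRestrict fun _ => ((‖u‖ : 𝕜)⁻¹) • u) :=
    orthonormal_subsingleton_iff.mpr fun _ => norm_smul_inv_norm hu
  obtain ⟨b', hb'⟩ := hunit.exists_orthonormalBasis_extension_of_card_eq
    (by simp : Module.finrank 𝕜 (EuclideanSpace 𝕜 d) = Fintype.card d)
  refine ⟨b.toBasis.toMatrix b', b.toMatrix_orthonormalBasis_mem_unitary b', ‖u‖, ?_⟩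
  ext i
  have hnorm : (‖u‖ : 𝕜) ≠ 0 := RCLike.ofReal_ne_zero.mpr (norm_ne_zero_iff.mpr hu)
  have hcol : b.toBasis.toMatrix b' i j = (‖u‖ : 𝕜)⁻¹ * v i := by
    simp [b, u, Module.Basis.toMatrix_apply, hb' j rfl]
  rw [mulVec_single, Pi.smul_apply, col_apply, MulOpposite.smul_eq_mul_unop, MulOpposite.unop_op,
    hcol, mul_right_comm, inv_mul_cancel₀ hnorm, one_mul]

end UnitaryGroup

theorem integral_trace_mul {Ω m 𝕜 : Type*} [Fintype m] [RCLike 𝕜] [MeasurableSpace Ω]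
    {μ : Measure Ω} (C : Matrix m m 𝕜) {F : Ω → Matrix m m 𝕜}
    (hF : ∀ x y, Integrable (fun ω => F ω x y) μ) :
    ∫ ω, (C * F ω).trace ∂μ = (C * Matrix.of fun x y => ∫ ω, F ω x y ∂μ).trace := by
  have hint (x y : m) := (hF y x).const_mul (C x y)
  simp only [Matrix.trace, diag_apply, Matrix.mul_apply, of_apply]
  rw [integral_finsetSum _ fun x _ => integrable_finsetSum _ fun y _ => hint x y]
  simp only [integral_finsetSum _ fun y _ => hint _ y, integral_const_mul]

section EffectMoment

variable {d : Type*} [Fintype d] [DecidableEq d]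

/-- The effect `U† |z⟩⟨z| U` of the outcome `z` of measuring in the standard basis after applying
`U`. -/
def basisEffect (z : d) (U : Matrix d d ℂ) : Matrix d d ℂ :=
  Uᴴ * Matrix.single z z 1 * U

theorem basisEffect_mul (z : d) (U W : Matrix d d ℂ) :
    basisEffect z (U * W) = Wᴴ * basisEffect z U * W := by
  simp only [basisEffect, conjTranspose_mul, Matrix.mul_assoc]

theorem basisEffect_conjTranspose (z : d) (U : Matrix d d ℂ) :
    (basisEffect z U)ᴴ = basisEffect z U := by
  simp only [basisEffect, conjTranspose_mul, conjTranspose_conjTranspose, conjTranspose_single,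
    star_one, Matrix.mul_assoc]

theorem basisEffect_eq_vecMulVec (z : d) (U : Matrix d d ℂ) :
    basisEffect z U = vecMulVec (star (U.row z)) (U.row z) := by
  rw [basisEffect, Matrix.single_eq_single_vecMulVec_single, mul_vecMulVec, vecMulVec_mul,
    mulVec_single_one, single_one_vecMul]
  rfl

theorem trace_basisEffect (z : d) {U : Matrix d d ℂ} (hU : U ∈ unitaryGroup d ℂ) :
    (basisEffect z U).trace = 1 := by
  rw [basisEffect, trace_mul_comm, ← Matrix.mul_assoc, ← star_eq_conjTranspose,
    mem_unitaryGroup_iff.mp hU, Matrix.one_mul, trace_single_eq_same]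

variable (ι : Type*) [Fintype ι] [MeasurableSpace (unitaryGroup d ℂ)]

/-- The average of `(U† |z⟩⟨z| U)^{⊗ι}` over a random unitary `U`, taken entrywise. -/
noncomputable def effectMoment (μ : Measure (unitaryGroup d ℂ)) (z : d) :
    Matrix (ι → d) (ι → d) ℂ :=
  Matrix.of fun x y => ∫ U : unitaryGroup d ℂ, piTensor (fun _ : ι => basisEffect z U) x y ∂μ

theorem effectMoment_apply_comp_perm (μ : Measure (unitaryGroup d ℂ)) (z : d)
    (σ τ : Equiv.Perm ι) (x y : ι → d) :
    effectMoment ι μ z (x ∘ σ) (y ∘ τ) = effectMoment ι μ z x y := by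
  simp only [effectMoment, basisEffect_eq_vecMulVec, piTensor_vecMulVec, of_apply,
    vecMulVec_apply, tensorPow_comp_perm]

variable [BorelSpace (unitaryGroup d ℂ)] (μ : Measure (unitaryGroup d ℂ)) (z : d)

theorem integral_basisEffect_form_pow [μ.IsMulRightInvariant] (v : d → ℂ) (k : ℕ) :
    ∫ U : unitaryGroup d ℂ, (star v ⬝ᵥ basisEffect z U *ᵥ v) ^ k ∂μ =
      (∫ U : unitaryGroup d ℂ, basisEffect z (U : Matrix d d ℂ) z z ^ k ∂μ) *
        (star v ⬝ᵥ v) ^ k := by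
  obtain ⟨W, hW, r, rfl⟩ := exists_unitary_mulVec_single_eq z v
  have hconj (A : Matrix d d ℂ) : star (W *ᵥ Pi.single z r) ⬝ᵥ A *ᵥ W *ᵥ Pi.single z r =
      (Wᴴ * A * W) z z * (star r * r) := by
    rw [star_mulVec, ← dotProduct_mulVec, mulVec_mulVec, mulVec_mulVec]
    simp only [mulVec_single, dotProduct_smul, ← Pi.single_star,
      single_dotProduct, MulOpposite.smul_eq_mul_unop, MulOpposite.unop_op, col_apply]
    ring
  have hnorm : star (W *ᵥ Pi.single z r) ⬝ᵥ W *ᵥ Pi.single z r = star r * r := by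
    have h := hconj 1
    rwa [one_mulVec, Matrix.mul_one, ← star_eq_conjTranspose, mem_unitaryGroup_iff'.mp hW,
      one_apply_eq, one_mul] at h
  simp only [hconj, hnorm, ← basisEffect_mul, mul_pow, integral_mul_const]
  exact congrArg (· * _) <| integral_mul_right_eq_self
    (fun U : unitaryGroup d ℂ => basisEffect z (U : Matrix d d ℂ) z z ^ k) ⟨W, hW⟩

theorem integrable_piTensor_basisEffect [IsFiniteMeasure μ] (x y : ι → d) :
    Integrable (fun U : unitaryGroup d ℂ => piTensor (fun _ : ι => basisEffect z U) x y) μ := by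
  have heffect : Continuous fun U : unitaryGroup d ℂ => basisEffect z (U : Matrix d d ℂ) :=
    (continuous_subtype_val.matrix_conjTranspose.matrix_mul continuous_const).matrix_mul
      continuous_subtype_val
  have hcont : Continuous fun U : unitaryGroup d ℂ =>
      piTensor (fun _ : ι => basisEffect z U) x y :=
    continuous_finsetProd _ fun c _ => heffect.matrix_elem (x c) (y c)
  exact hcont.integrable_of_hasCompactSupport (HasCompactSupport.of_compactSpace _)

variable [DecidableEq ι]

theorem trace_effectMoment [IsProbabilityMeasure μ] : (effectMoment ι μ z).trace = 1 := by
  have htrace (U : unitaryGroup d ℂ) : (piTensor fun _ : ι => basisEffect z U).trace = 1 := by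
    simp only [trace_piTensor, trace_basisEffect z U.2, Finset.prod_const_one]
  have h := integral_trace_mul 1 (integrable_piTensor_basisEffect ι μ z)
  simp only [Matrix.one_mul, htrace, integral_const, probReal_univ, one_smul] at h
  exact h.symm

theorem tensorPow_dotProduct_effectMoment_mulVec [IsFiniteMeasure μ] (u v : d → ℂ) :
    tensorPow ι u ⬝ᵥ effectMoment ι μ z *ᵥ tensorPow ι v =
      ∫ U : unitaryGroup d ℂ, (u ⬝ᵥ basisEffect z U *ᵥ v) ^ Fintype.card ι ∂μ := by
  have hform (M : Matrix (ι → d) (ι → d) ℂ) :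
      tensorPow ι u ⬝ᵥ M *ᵥ tensorPow ι v =
        (vecMulVec (tensorPow ι v) (tensorPow ι u) * M).trace := by
    rw [trace_mul_comm, mul_vecMulVec, trace_vecMulVec, dotProduct_comm]
  simp only [← tensorPow_dotProduct_tensorPow, ← piTensor_mulVec_tensorPow, hform]
  exact (integral_trace_mul _ (integrable_piTensor_basisEffect ι μ z)).symm

/-- Both sides are invariant under permuting rows or columns, so they are determined by the values
of their quadratic forms on product vectors. -/
theorem effectMoment_eq_smul_symProj [IsProbabilityMeasure μ] [μ.IsMulRightInvariant] :
    effectMoment ι μ z = (symProj ι d ℂ).trace⁻¹ • symProj ι d ℂ := by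
  set m : ℂ := ∫ U : unitaryGroup d ℂ, basisEffect z (U : Matrix d d ℂ) z z ^ Fintype.card ι ∂μ
    with hm
  have hsmul : effectMoment ι μ z = m • symProj ι d ℂ := by
    rw [← sub_eq_zero]
    refine eq_zero_of_tensorPow_dotProduct_mulVec (fun σ τ x y => ?_) fun v => ?_
    · simp only [Matrix.sub_apply, Matrix.smul_apply, effectMoment_apply_comp_perm,
        symProj_apply_comp_perm]
    · rw [sub_mulVec, dotProduct_sub, smul_mulVec, dotProduct_smul,
        tensorPow_dotProduct_effectMoment_mulVec, integral_basisEffect_form_pow, ← hm,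
        symProj_mulVec_of_comp_perm fun σ x => tensorPow_comp_perm v x σ,
        tensorPow_dotProduct_tensorPow, smul_eq_mul, sub_self]
  have htrace : m * (symProj ι d ℂ).trace = 1 := by
    rw [← trace_effectMoment ι μ z, hsmul, trace_smul, smul_eq_mul]
  rw [hsmul, eq_inv_of_mul_eq_one_left htrace]

end EffectMoment

theorem prod_dite_subtype {ι M : Type*} [Fintype ι] [CommMonoid M] {p : ι → Prop}
    [DecidablePred p] [Fintype {i // p i}] [Fintype {i // ¬p i}] (f : {i // p i} → M)
    (g : ι → M) :
    ∏ i, (if h : p i then f ⟨i, h⟩ else g i) = (∏ i, f i) * ∏ i : {i // ¬p i}, g i := by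
  rw [Fintype.prod_dite]
  congr!

section Fubini

variable {ι 𝕜 : Type*} [Fintype ι] [RCLike 𝕜] {p : ι → Prop} [DecidablePred p]
  [Fintype {i // p i}] {Ω : {i // p i} → Type*} [∀ i, MeasurableSpace (Ω i)]
  {μ : ∀ i, Measure (Ω i)} [∀ i, SigmaFinite (μ i)]

theorem integrable_prod_dite {f : ∀ i, Ω i → 𝕜} (hf : ∀ i, Integrable (f i) (μ i))
    (g : ι → 𝕜) :
    Integrable (fun ω : ∀ i, Ω i => ∏ i, if h : p i then f ⟨i, h⟩ (ω ⟨i, h⟩) else g i)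
      (Measure.pi μ) := by
  simp only [prod_dite_subtype fun i => f i _]
  exact (Integrable.fintype_prod_dep hf).mul_const _

theorem integral_prod_dite (f : ∀ i, Ω i → 𝕜) (g : ι → 𝕜) :
    ∫ ω : ∀ i, Ω i, ∏ i, (if h : p i then f ⟨i, h⟩ (ω ⟨i, h⟩) else g i)
        ∂(Measure.pi μ) =
      ∏ i, if h : p i then ∫ ω, f ⟨i, h⟩ ω ∂μ ⟨i, h⟩ else g i := by
  rw [prod_dite_subtype fun i => ∫ ω, f i ω ∂μ i, ← integral_fintype_prod_eq_prod,
    ← integral_mul_const]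
  simp only [prod_dite_subtype fun i => f i _]

end Fubini

theorem permOp3_eq_permOp (σ : Equiv.Perm (Fin 3)) : permOp3 σ = permOp (Fin 2) ℂ σ := by
  ext x y
  exact if_congr funext_iff.symm rfl rfl

theorem sym3_eq_symProj : sym3 = symProj (Fin 3) (Fin 2) ℂ := by
  simp [sym3, symProj, permOp3_eq_permOp, Nat.factorial]

theorem trace_sym3 : sym3.trace = 4 := by
  have hcount : ∑ σ : Equiv.Perm (Fin 3), ∑ x : Fin 3 → Fin 2,
      (if ∀ c, x c = x (σ c) then 1 else 0) = 24 := by decide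
  have hperm : ∑ σ : Equiv.Perm (Fin 3), (permOp3 σ).trace = 24 := by
    simp only [Matrix.trace, diag_apply, permOp3]
    exact_mod_cast hcount
  rw [sym3, trace_smul, trace_sum, hperm]
  norm_num

theorem isStarProjection_sym3 : IsStarProjection sym3 :=
  sym3_eq_symProj ▸ isStarProjection_symProj

theorem effectMoment_fin_three (μ : Measure (unitaryGroup (Fin 2) ℂ)) [IsProbabilityMeasure μ]
    [μ.IsMulRightInvariant] (z : Fin 2) :
    effectMoment (Fin 3) μ z = (1 / 4 : ℂ) • sym3 := by
  rw [effectMoment_eq_smul_symProj, ← sym3_eq_symProj, trace_sym3, one_div]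

section Qubits

variable {n : ℕ}

theorem rho3_eq_piTensor (ρ : QMat n) : rho3 ρ = piTensor fun _ : Fin 3 => ρ :=
  rfl

theorem symAt3_eq_piTensor (i : Fin n) :
    symAt3 i = (piTensor (Function.update (fun _ => 1) i sym3)).submatrix
      (Equiv.piComm fun _ _ => Fin 2) (Equiv.piComm fun _ _ => Fin 2) := by
  ext x y
  simp only [symAt3, Matrix.submatrix_apply, piTensor_apply]
  split_ifs with h
  · rw [Finset.prod_eq_single_of_mem i (Finset.mem_univ i) fun j _ hj => ?_,
      Function.update_self]
    · rfl
    · rw [Function.update_of_ne hj, Matrix.one_apply]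
      exact if_pos (funext fun c => h c j hj)
  · push Not at h
    obtain ⟨c, j, hj, hne⟩ := h
    refine (Finset.prod_eq_zero (Finset.mem_univ j) ?_).symm
    rw [Function.update_of_ne hj, Matrix.one_apply, if_neg fun h => hne (congrFun h c)]

theorem prod_symAt3_eq_piTensor {l : List (Fin n)} (hl : l.Nodup) :
    (l.map fun i => symAt3 i).prod = (piTensor fun i => if i ∈ l then sym3 else 1).submatrix
      (Equiv.piComm fun _ _ => Fin 2) (Equiv.piComm fun _ _ => Fin 2) := by
  induction l with
  | nil =>
    simp only [List.map_nil, List.prod_nil, List.not_mem_nil, if_false, piTensor_one,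
      submatrix_one_equiv]
  | cons i l ih =>
    obtain ⟨hi, hl⟩ := List.nodup_cons.mp hl
    rw [List.map_cons, List.prod_cons, ih hl, symAt3_eq_piTensor, Matrix.submatrix_mul_equiv,
      piTensor_mul]
    congr 2
    funext j
    obtain rfl | hj := eq_or_ne j i
    · simp [hi]
    · simp [hj]

theorem prodSym3_eq_piTensor (S : Finset (Fin n)) :
    prodSym3 S = (piTensor fun i => if i ∈ S then sym3 else 1).submatrix
      (Equiv.piComm fun _ _ => Fin 2) (Equiv.piComm fun _ _ => Fin 2) := by
  simp only [prodSym3, prod_symAt3_eq_piTensor (S.sort_nodup _), Finset.mem_sort]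

theorem prodSym3_apply (S : Finset (Fin n)) (x y : Fin 3 → Fin n → Fin 2) :
    prodSym3 S x y = ∏ i, (if i ∈ S then sym3 else 1) (fun c => x c i) (fun c => y c i) := by
  rw [prodSym3_eq_piTensor]
  rfl

theorem isStarProjection_prodSym3 (S : Finset (Fin n)) : IsStarProjection (prodSym3 S) := by
  rw [prodSym3_eq_piTensor]
  refine isStarProjection_submatrix (isStarProjection_piTensor fun i => ?_) _
  split_ifs
  exacts [isStarProjection_sym3, .one _]

theorem re_trace_rho3_mul_prodSym3_le_one {ρ : QMat n} (hρ : ρ.PosSemidef) (htr : ρ.trace = 1)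
    (S : Finset (Fin n)) : (rho3 ρ * prodSym3 S).trace.re ≤ 1 := by
  have hle := trace_mul_le_trace (posSemidef_piTensor fun _ : Fin 3 => hρ)
    (isStarProjection_prodSym3 S)
  rw [trace_piTensor, Finset.prod_congr rfl fun _ _ => htr, Finset.prod_const_one] at hle
  exact (Complex.le_def.mp hle).1

section LocalOp

variable (S : Finset (Fin n))

theorem localOp_eq_piTensor (A : {i : Fin n // i ∈ S} → Matrix (Fin 2) (Fin 2) ℂ) :
    localOp S A = piTensor fun i => if h : i ∈ S then A ⟨i, h⟩ else 1 := by
  ext x y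
  refine Finset.prod_congr rfl fun i _ => ?_
  split_ifs <;> simp_all [Matrix.one_apply]

theorem projZ_eq_localOp (z : {i : Fin n // i ∈ S} → Fin 2) :
    projZ S z = localOp S fun i => Matrix.single (z i) (z i) 1 := by
  ext x y
  simp only [projZ, localOp, Matrix.single_apply, eq_comm]

theorem localOp_mul (A B : {i : Fin n // i ∈ S} → Matrix (Fin 2) (Fin 2) ℂ) :
    localOp S A * localOp S B = localOp S fun i => A i * B i := by
  simp only [localOp_eq_piTensor, piTensor_mul]
  congr 1
  funext i
  split_ifs
  exacts [rfl, one_mul 1]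

theorem localOp_conjTranspose (A : {i : Fin n // i ∈ S} → Matrix (Fin 2) (Fin 2) ℂ) :
    (localOp S A)ᴴ = localOp S fun i => (A i)ᴴ := by
  simp only [localOp_eq_piTensor, piTensor_conjTranspose]
  congr 1
  funext i
  split_ifs
  exacts [rfl, conjTranspose_one]

theorem piTensor_localOp_apply {κ : Type*} [Fintype κ]
    (A : {i : Fin n // i ∈ S} → Matrix (Fin 2) (Fin 2) ℂ) (x y : κ → Fin n → Fin 2) :
    piTensor (fun _ => localOp S A) x y = ∏ i, if h : i ∈ S then
      piTensor (fun _ => A ⟨i, h⟩) (fun c => x c i) (fun c => y c i)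
      else (1 : Matrix (κ → Fin 2) _ ℂ) (fun c => x c i) (fun c => y c i) := by
  rw [localOp_eq_piTensor, piTensor_comm, submatrix_apply, piTensor_apply]
  refine Finset.prod_congr rfl fun i _ => ?_
  split_ifs
  · rfl
  · exact congrFun₂ (piTensor_one (ι := κ) (m := fun _ => Fin 2) (R := ℂ)) _ _

end LocalOp

section Born

variable (S : Finset (Fin n)) (z : {i : Fin n // i ∈ S} → Fin 2)

/-- The effect `U† |z⟩⟨z| U` of the outcome `z` on the qubits in `S`, for `U = ⨂ᵢ Vᵢ`. -/
noncomputable def outcomeEffect (V : {i : Fin n // i ∈ S} → unitaryGroup (Fin 2) ℂ) : QMat n :=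
  localOp S fun i => basisEffect (z i) (V i)

variable (V : {i : Fin n // i ∈ S} → unitaryGroup (Fin 2) ℂ)

theorem born_eq_re_trace_mul_outcomeEffect (ρ : QMat n) :
    born ρ S V z = (ρ * outcomeEffect S z V).trace.re := by
  have hconj : outcomeEffect S z V = (localOp S fun i => (V i : Matrix (Fin 2) (Fin 2) ℂ))ᴴ *
      projZ S z * localOp S fun i => (V i : Matrix (Fin 2) (Fin 2) ℂ) := by
    rw [localOp_conjTranspose, projZ_eq_localOp, localOp_mul, localOp_mul]
    rfl
  rw [born, hconj, Matrix.mul_assoc, Matrix.mul_assoc, trace_mul_comm]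
  simp only [Matrix.mul_assoc]

theorem outcomeEffect_conjTranspose : (outcomeEffect S z V)ᴴ = outcomeEffect S z V := by
  simp only [outcomeEffect, localOp_conjTranspose, basisEffect_conjTranspose]

theorem ofReal_born {ρ : QMat n} (hρ : ρ.IsHermitian) :
    (born ρ S V z : ℂ) = (ρ * outcomeEffect S z V).trace := by
  rw [born_eq_re_trace_mul_outcomeEffect]
  refine Complex.conj_eq_iff_re.mp ?_
  rw [← Complex.star_def, ← trace_conjTranspose, conjTranspose_mul, hρ.eq,
    outcomeEffect_conjTranspose, trace_mul_comm]

theorem ofReal_born_pow_three {ρ : QMat n} (hρ : ρ.IsHermitian) :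
    ((born ρ S V z ^ 3 : ℝ) : ℂ) =
      (rho3 ρ * piTensor fun _ : Fin 3 => outcomeEffect S z V).trace := by
  rw [rho3_eq_piTensor, piTensor_mul, trace_piTensor, Fin.prod_const, ← ofReal_born S z V hρ,
    Complex.ofReal_pow]

variable (μ : Measure (unitaryGroup (Fin 2) ℂ))

theorem integrable_piTensor_outcomeEffect [IsFiniteMeasure μ] (x y : Fin 3 → Fin n → Fin 2) :
    Integrable (fun V => piTensor (fun _ => outcomeEffect S z V) x y)
      (Measure.pi fun _ : {i : Fin n // i ∈ S} => μ) := by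
  simp only [outcomeEffect, piTensor_localOp_apply]
  exact integrable_prod_dite (p := (· ∈ S))
    (f := fun i (U : unitaryGroup (Fin 2) ℂ) => piTensor (fun _ : Fin 3 => basisEffect (z i) U.1)
      (fun c => x c i) (fun c => y c i))
    (fun i => integrable_piTensor_basisEffect (Fin 3) μ (z i) _ _)
    fun i => (1 : Matrix (Fin 3 → Fin 2) _ ℂ) (fun c => x c i) (fun c => y c i)

variable [IsProbabilityMeasure μ]

theorem integral_piTensor_outcomeEffect [μ.IsMulRightInvariant] (x y : Fin 3 → Fin n → Fin 2) :
    ∫ V, piTensor (fun _ => outcomeEffect S z V) x y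
      ∂(Measure.pi fun _ : {i : Fin n // i ∈ S} => μ) = (1 / 4) ^ S.card * prodSym3 S x y := by
  simp only [outcomeEffect, piTensor_localOp_apply, prodSym3_apply]
  refine (integral_prod_dite (p := (· ∈ S))
    (fun i (U : unitaryGroup (Fin 2) ℂ) => piTensor (fun _ : Fin 3 => basisEffect (z i) U.1)
      (fun c => x c i) (fun c => y c i))
    fun i => (1 : Matrix (Fin 3 → Fin 2) _ ℂ) (fun c => x c i) (fun c => y c i)).trans ?_
  have hcard : (1 / 4 : ℂ) ^ S.card = ∏ i, if i ∈ S then 1 / 4 else 1 := by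
    rw [Finset.prod_ite_mem, Finset.univ_inter, Finset.prod_const]
  rw [hcard, ← Finset.prod_mul_distrib]
  refine Finset.prod_congr rfl fun i _ => ?_
  split_ifs with hi
  · exact congrFun₂ (effectMoment_fin_three μ (z ⟨i, hi⟩)) _ _
  · rw [one_mul]

theorem integral_born_pow_three [μ.IsMulRightInvariant] {ρ : QMat n} (hρ : ρ.IsHermitian) :
    ∫ V, born ρ S V z ^ 3 ∂(Measure.pi fun _ : {i : Fin n // i ∈ S} => μ) =
      (1 / 4 : ℝ) ^ S.card * (rho3 ρ * prodSym3 S).trace.re := by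
  have hmoment : (Matrix.of fun x y => ∫ V, piTensor (fun _ => outcomeEffect S z V) x y
      ∂(Measure.pi fun _ : {i : Fin n // i ∈ S} => μ)) = (1 / 4 : ℂ) ^ S.card • prodSym3 S :=
    Matrix.ext (integral_piTensor_outcomeEffect S z μ)
  have h : ((∫ V, born ρ S V z ^ 3 ∂(Measure.pi fun _ : {i : Fin n // i ∈ S} => μ) : ℝ) : ℂ) =
      ((1 / 4 : ℝ) ^ S.card : ℝ) * (rho3 ρ * prodSym3 S).trace := by
    rw [← integral_complex_ofReal]
    simp only [ofReal_born_pow_three S z _ hρ]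
    rw [integral_trace_mul _ (integrable_piTensor_outcomeEffect S z μ), hmoment, mul_smul_comm,
      trace_smul]
    simp
  rw [← Complex.re_ofReal_mul, ← h, Complex.ofReal_re]

end Born

end Qubits

theorem LRM_third_moment_general {n : ℕ} {ρ : QMat n} (hρ : ρ.PosSemidef) (htr : ρ.trace = 1)
    (S : Finset (Fin n)) (z : {i : Fin n // i ∈ S} → Fin 2)
    (μ : Measure (unitaryGroup (Fin 2) ℂ)) [μ.IsHaarMeasure] [IsProbabilityMeasure μ] :
    (∫ V, born ρ S V z ^ 3 ∂(Measure.pi fun _ : {i : Fin n // i ∈ S} => μ)) =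
        (1 / 4 : ℝ) ^ S.card * (rho3 ρ * prodSym3 S).trace.re ∧
      (∫ V, born ρ S V z ^ 3 ∂(Measure.pi fun _ : {i : Fin n // i ∈ S} => μ)) ≤
        (1 / 4 : ℝ) ^ S.card ∧
      ∑ z' : {i : Fin n // i ∈ S} → Fin 2,
          ∫ V, born ρ S V z' ^ 3 ∂(Measure.pi fun _ : {i : Fin n // i ∈ S} => μ) ≤
        (1 / 2 : ℝ) ^ S.card := by
  have := isMulRightInvariant_of_isHaarMeasure μ
  have hle (z' : {i : Fin n // i ∈ S} → Fin 2) :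
      ∫ V, born ρ S V z' ^ 3 ∂(Measure.pi fun _ : {i : Fin n // i ∈ S} => μ) ≤
        (1 / 4 : ℝ) ^ S.card := by
    rw [integral_born_pow_three S z' μ hρ.isHermitian]
    exact mul_le_of_le_one_right (by positivity) (re_trace_rho3_mul_prodSym3_le_one hρ htr S)
  refine ⟨integral_born_pow_three S z μ hρ.isHermitian, hle z, ?_⟩
  calc ∑ z' : {i : Fin n // i ∈ S} → Fin 2,
          ∫ V, born ρ S V z' ^ 3 ∂(Measure.pi fun _ : {i : Fin n // i ∈ S} => μ)
      ≤ ∑ _ : {i : Fin n // i ∈ S} → Fin 2, (1 / 4 : ℝ) ^ S.card :=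
        Finset.sum_le_sum fun z' _ => hle z'
    _ = (2 * (1 / 4) : ℝ) ^ S.card := by
        simp [mul_pow]
    _ = (1 / 2 : ℝ) ^ S.card := by norm_num

/-- **Third moment of the LRM outcome probability**: for any fixed bitstring `z`,
`𝔼_U[P_U(z)³] = 4^{-s} tr(ρ^{⊗3} ∏_{i∈S} Π_{sym,3}^i) ≤ 4^{-s}`, and consequently
`∑_z 𝔼_U[P_U(z)³] ≤ 2^{-s}`. -/
theorem LRM_third_moment (n : ℕ) (ψ : (Fin n → Fin 2) → ℂ)
    (hψ : (∑ x, star (ψ x) * ψ x) = 1)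
    (S : Finset (Fin n)) (hS : S.Nonempty) (z : {i : Fin n // i ∈ S} → Fin 2)
    (μ : Measure (Matrix.unitaryGroup (Fin 2) ℂ)) [μ.IsHaarMeasure] [IsProbabilityMeasure μ] :
    (∫ V : ({i : Fin n // i ∈ S} → Matrix.unitaryGroup (Fin 2) ℂ),
        (born (Matrix.vecMulVec ψ (star ψ)) S V z) ^ 3
        ∂(Measure.pi fun _ : {i : Fin n // i ∈ S} => μ))
      = (1 / 4 : ℝ) ^ S.card *
          (Matrix.trace (rho3 (Matrix.vecMulVec ψ (star ψ)) * prodSym3 S)).re ∧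
    (∫ V : ({i : Fin n // i ∈ S} → Matrix.unitaryGroup (Fin 2) ℂ),
        (born (Matrix.vecMulVec ψ (star ψ)) S V z) ^ 3
        ∂(Measure.pi fun _ : {i : Fin n // i ∈ S} => μ))
      ≤ (1 / 4 : ℝ) ^ S.card ∧
    (∑ z' : ({i : Fin n // i ∈ S} → Fin 2),
        ∫ V : ({i : Fin n // i ∈ S} → Matrix.unitaryGroup (Fin 2) ℂ),
          (born (Matrix.vecMulVec ψ (star ψ)) S V z') ^ 3
          ∂(Measure.pi fun _ : {i : Fin n // i ∈ S} => μ))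
      ≤ (1 / 2 : ℝ) ^ S.card :=
  LRM_third_moment_general (posSemidef_vecMulVec_self_star ψ)
    ((trace_vecMulVec ψ (star ψ)).trans ((dotProduct_comm ψ (star ψ)).trans hψ)) S z μ
end

section
/- Let φ̃_i = φ_i/√2 (i = 1,…,4) be the single-qubit SIC-POVM vectors with φ₁ = (1,0), φ₂ = (1/√3, √(2/3)), φ₃ = (1/√3, √(2/3)e^{i2π/3}), φ₄ = (1/√3, √(2/3)e^{i4π/3}), and define φ̃₁⊥ = (0, 1/√2), φ̃₂⊥ = (1/√3, −1/√6), φ̃₃⊥ = (e^{−i2π/3}/√3, −1/√6), φ̃₄⊥ = (e^{−i4π/3}/√3, −1/√6). Define u_i = φ̃_i ⊕ φ̃_i⊥ ∈ C⁴ (the first two coordinates of u_i are those of φ̃_i and the last two are those of φ̃_i⊥). Then: (i) {u₁, u₂, u₃, u₄} is an orthonormal basis of C⁴; and (ii) for every 2-by-2 complex matrix ρ, tr( (ρ ⊕ 0) · |u_i⟩⟨u_i| ) = tr( ρ · |φ̃_i⟩⟨φ̃_i| ) for all i, where ρ ⊕ 0 is the 4-by-4 block matrix with ρ in the top-left 2-by-2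 block and zeros elsewhere (Neumark dilation of the single-qubit SIC-POVM). -/
open Matrix MeasureTheory
open scoped BigOperators ComplexConjugate Kronecker

/-- The four SIC vectors `φ₁, …, φ₄` in `ℂ²`. -/
noncomputable def sicVec : Fin 4 → Fin 2 → ℂ :=
  ![![1, 0],
    ![((1 / Real.sqrt 3 : ℝ) : ℂ), ((Real.sqrt (2/3) : ℝ) : ℂ)],
    ![((1 / Real.sqrt 3 : ℝ) : ℂ),
      ((Real.sqrt (2/3) : ℝ) : ℂ) * Complex.exp (2 * Real.pi * Complex.I / 3)],
    ![((1 / Real.sqrt 3 : ℝ) : ℂ),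
      ((Real.sqrt (2/3) : ℝ) : ℂ) * Complex.exp (4 * Real.pi * Complex.I / 3)]]

/-- The rescaled SIC-POVM vectors `φ̃ᵢ = φᵢ/√2`. -/
noncomputable def sicTilde (i : Fin 4) : Fin 2 → ℂ :=
  fun a => sicVec i a / ((Real.sqrt 2 : ℝ) : ℂ)

/-- The vectors `φ̃ᵢ^⊥` completing the rescaled SIC vectors to an orthonormal basis. -/
noncomputable def sicPerp : Fin 4 → Fin 2 → ℂ :=
  ![![0, ((1 / Real.sqrt 2 : ℝ) : ℂ)],
    ![((1 / Real.sqrt 3 : ℝ) : ℂ), (-(1 / Real.sqrt 6 : ℝ) : ℂ)],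
    ![Complex.exp (-(2 * Real.pi * Complex.I / 3)) / ((Real.sqrt 3 : ℝ) : ℂ),
      (-(1 / Real.sqrt 6 : ℝ) : ℂ)],
    ![Complex.exp (-(4 * Real.pi * Complex.I / 3)) / ((Real.sqrt 3 : ℝ) : ℂ),
      (-(1 / Real.sqrt 6 : ℝ) : ℂ)]]

/-- The Neumark vectors `uᵢ = φ̃ᵢ ⊕ φ̃ᵢ^⊥ ∈ ℂ² ⊕ ℂ² ≅ ℂ⁴`. -/
noncomputable def neumarkU (i : Fin 4) : (Fin 2 ⊕ Fin 2) → ℂ :=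
  Sum.elim (sicTilde i) (sicPerp i)

/-!
In the orthonormal basis `(e₀ - e₃)/√2, e₁, e₂, (e₀ + e₃)/√2` of `ℂ² ⊕ ℂ²`, the vector `u₁` is the
last basis vector, while `u₂, u₃, u₄` have coordinates `(1, z, z⁻¹, 0)/√3` with `z` running over the
three cube roots of unity. Orthonormality is thus the orthogonality of the characters of `ℤ/3`. For
the statistics, a product with `ρ ⊕ 0` has trace depending only on the upper-left block of the other
factor, and that block of `|uᵢ⟩⟨uᵢ|` is `|φ̃ᵢ⟩⟨φ̃ᵢ|`.
-/

theorem trace_fromBlocks_zero_mul {m m' n n' R : Type*} [Fintype m] [Fintype m'] [Fintype n]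
    [Fintype n'] [NonUnitalNonAssocSemiring R] (A : Matrix m n R)
    (M : Matrix (n ⊕ n') (m ⊕ m') R) :
    trace (fromBlocks A 0 0 (0 : Matrix m' n' R) * M) = trace (A * M.toBlocks₁₁) := by
  conv_lhs => rw [← fromBlocks_toBlocks M, fromBlocks_multiply]
  simp [trace]

theorem toBlocks₁₁_vecMulVec {m m' n n' R : Type*} [Mul R] (v : m ⊕ m' → R) (w : n ⊕ n' → R) :
    (vecMulVec v w).toBlocks₁₁ = vecMulVec (v ∘ Sum.inl) (w ∘ Sum.inl) :=
  rfl

theorem geom_sum_eq_ite_of_pow_eq_one {R : Type*} [Ring R] [NoZeroDivisors R] [DecidableEq R]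
    {t : R} {n : ℕ} (ht : t ^ n = 1) :
    ∑ i ∈ Finset.range n, t ^ i = if t = 1 then (n : R) else 0 := by
  split_ifs with h
  · simp [h]
  · have : (t - 1) * ∑ i ∈ Finset.range n, t ^ i = 0 := by rw [mul_geom_sum, ht, sub_self]
    exact (mul_eq_zero.mp this).resolve_left (sub_ne_zero.mpr h)

/-- The Fourier vector `(1, z, z⁻¹)/√3` of `ℂ³`, isometrically embedded in `ℂ² ⊕ ℂ²` by sending its
first basis vector to `(e₀ - e₃)/√2` and the other two to `e₁` and `e₂`. -/
noncomputable def fourierVec (z : ℂ) : Fin 2 ⊕ Fin 2 → ℂ :=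
  Sum.elim ![1 / (√6 : ℝ), z / (√3 : ℝ)] ![z⁻¹ / (√3 : ℝ), -(1 / (√6 : ℝ))]

theorem star_fourierVec_dotProduct_fourierVec {z : ℂ} (hz : ‖z‖ = 1) (w : ℂ) :
    star (fourierVec z) ⬝ᵥ fourierVec w = (1 + w / z + (w / z)⁻¹) / 3 := by
  have hconj : (starRingEnd ℂ) z = z⁻¹ := (Complex.inv_eq_conj hz).symm
  have h3 : ((√3 : ℝ) : ℂ) ^ 2 = 3 := by norm_cast; simp
  have h6 : ((√6 : ℝ) : ℂ) ^ 2 = 6 := by norm_cast; simp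
  calc star (fourierVec z) ⬝ᵥ fourierVec w
    _ = 2 / (√6 : ℝ) ^ 2 + (w / z + (w / z)⁻¹) / (√3 : ℝ) ^ 2 := by
      simp only [fourierVec, dotProduct, Fintype.sum_sum_type, Fin.sum_univ_two, Pi.star_apply,
        Sum.elim_inl, Sum.elim_inr, cons_val_zero, cons_val_one, RCLike.star_def, map_div₀,
        map_inv₀, map_one, map_neg, Complex.conj_ofReal, hconj, inv_inv, inv_div]
      ring
    _ = (1 + w / z + (w / z)⁻¹) / 3 := by
      rw [h3, h6]
      ring

theorem star_fourierVec_dotProduct_fourierVec_of_pow_three_eq_one {z w : ℂ}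
    (hz : z ^ 3 = 1) (hw : w ^ 3 = 1) :
    star (fourierVec z) ⬝ᵥ fourierVec w = if z = w then 1 else 0 := by
  have hz0 : z ≠ 0 := by rintro rfl; norm_num at hz
  have ht : (w / z) ^ 3 = 1 := by rw [div_pow, hz, hw, div_one]
  have hinv : (w / z)⁻¹ = (w / z) ^ 2 := inv_eq_of_mul_eq_one_right (by rw [← pow_succ', ht])
  have hsum : 1 + w / z + (w / z)⁻¹ = if w / z = 1 then 3 else 0 := by
    simpa [Finset.sum_range_succ, hinv] using geom_sum_eq_ite_of_pow_eq_one ht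
  rw [star_fourierVec_dotProduct_fourierVec (Complex.norm_eq_one_of_pow_eq_one hz three_ne_zero),
    hsum]
  simp [ite_div, div_eq_one_iff_eq hz0, eq_comm]

theorem star_fourierVec_pow_dotProduct_fourierVec_pow {ζ : ℂ} (hζ : IsPrimitiveRoot ζ 3)
    (k l : Fin 3) :
    star (fourierVec (ζ ^ (k : ℕ))) ⬝ᵥ fourierVec (ζ ^ (l : ℕ)) = if k = l then 1 else 0 := by
  have hpow (m : ℕ) : (ζ ^ m) ^ 3 = 1 := by rw [pow_right_comm, hζ.pow_eq_one, one_pow]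
  have hinj : ζ ^ (k : ℕ) = ζ ^ (l : ℕ) ↔ k = l :=
    ⟨fun h => Fin.ext (hζ.pow_inj k.isLt l.isLt h), fun h => h ▸ rfl⟩
  simp only [star_fourierVec_dotProduct_fourierVec_of_pow_three_eq_one (hpow k) (hpow l), hinj]

theorem neumarkU_zero :
    neumarkU 0 = Sum.elim ![1 / ((√2 : ℝ) : ℂ), 0] ![0, 1 / ((√2 : ℝ) : ℂ)] := by
  ext (a | a) <;> fin_cases a <;> simp [neumarkU, sicTilde, sicVec, sicPerp]

theorem neumarkU_succ (k : Fin 3) :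
    neumarkU k.succ = fourierVec (Complex.exp (2 * Real.pi * Complex.I / 3) ^ (k : ℕ)) := by
  have h2 : ((√2 : ℝ) : ℂ) ≠ 0 := by simp
  have h6 : ((√6 : ℝ) : ℂ)⁻¹ = ((√3 : ℝ) : ℂ)⁻¹ / (√2 : ℝ) := by
    rw [show (6 : ℝ) = 3 * 2 by norm_num, Real.sqrt_mul zero_le_three, Complex.ofReal_mul,
      _root_.mul_inv, div_eq_mul_inv]
  have hcancel (x : ℂ) : (√2 : ℝ) / (√3 : ℝ) * x / (√2 : ℝ) = x / (√3 : ℝ) := by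
    rw [mul_div_right_comm, div_div_cancel_left' h2, inv_mul_eq_div]
  have hexp : Complex.exp (4 * Real.pi * Complex.I / 3)
      = Complex.exp (2 * Real.pi * Complex.I / 3) ^ 2 := by
    rw [← Complex.exp_nat_mul]
    congr 1
    push_cast
    ring
  ext (a | a) <;> fin_cases k <;> fin_cases a <;>
    simp [neumarkU, sicTilde, sicVec, sicPerp, fourierVec, hexp, Complex.exp_neg, h6,
      hcancel, div_div_cancel_left' h2]

theorem star_neumarkU_zero_dotProduct_self : star (neumarkU 0) ⬝ᵥ neumarkU 0 = 1 := by
  have h2 : ((√2 : ℝ) : ℂ) ^ 2 = 2 := by norm_cast; simp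
  calc star (neumarkU 0) ⬝ᵥ neumarkU 0
    _ = 2 / (√2 : ℝ) ^ 2 := by
      simp only [neumarkU_zero, dotProduct, Fintype.sum_sum_type, Fin.sum_univ_two, Pi.star_apply,
        Sum.elim_inl, Sum.elim_inr, cons_val_zero, cons_val_one, RCLike.star_def, map_div₀,
        map_one, map_zero, Complex.conj_ofReal]
      ring
    _ = 1 := by rw [h2, div_self two_ne_zero]

theorem star_neumarkU_zero_dotProduct_fourierVec (z : ℂ) :
    star (neumarkU 0) ⬝ᵥ fourierVec z = 0 := by
  simp [neumarkU_zero, fourierVec, dotProduct, Fintype.sum_sum_type]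

theorem star_neumarkU_dotProduct_neumarkU (i j : Fin 4) :
    star (neumarkU i) ⬝ᵥ neumarkU j = if i = j then 1 else 0 := by
  have hζ : IsPrimitiveRoot (Complex.exp (2 * Real.pi * Complex.I / 3)) 3 :=
    mod_cast Complex.isPrimitiveRoot_exp 3 three_ne_zero
  cases i using Fin.cases with
  | zero =>
    cases j using Fin.cases with
    | zero => rw [star_neumarkU_zero_dotProduct_self, if_pos rfl]
    | succ l =>
      rw [neumarkU_succ, star_neumarkU_zero_dotProduct_fourierVec, if_neg (Fin.succ_ne_zero l).symm]
  | succ k =>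
    cases j using Fin.cases with
    | zero =>
      rw [neumarkU_succ, star_dotProduct, star_neumarkU_zero_dotProduct_fourierVec, star_zero,
        if_neg (Fin.succ_ne_zero k)]
    | succ l =>
      simp only [neumarkU_succ, Fin.succ_inj, star_fourierVec_pow_dotProduct_fourierVec_pow hζ]

/-- **Neumark dilation of the single-qubit SIC-POVM**: the vectors `uᵢ = φ̃ᵢ ⊕ φ̃ᵢ^⊥` form an
orthonormal basis of `ℂ⁴`, and the projective measurement `{|uᵢ⟩⟨uᵢ|}` on `ℂ⁴` reproduces the
SIC-POVM statistics: `tr((ρ ⊕ 0)|uᵢ⟩⟨uᵢ|) = tr(ρ|φ̃ᵢ⟩⟨φ̃ᵢ|)` for every 2×2 matrix `ρ`. -/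
theorem neumark_dilation_SIC :
    (∀ i j : Fin 4, (∑ a : Fin 2 ⊕ Fin 2, star (neumarkU i a) * neumarkU j a)
        = if i = j then 1 else 0) ∧
    (∀ ρ : Matrix (Fin 2) (Fin 2) ℂ, ∀ i : Fin 4,
      Matrix.trace (Matrix.fromBlocks ρ 0 0 0 *
          Matrix.vecMulVec (neumarkU i) (star (neumarkU i)))
        = Matrix.trace (ρ * Matrix.vecMulVec (sicTilde i) (star (sicTilde i)))) := by
  refine ⟨star_neumarkU_dotProduct_neumarkU, fun ρ i => ?_⟩
  rw [trace_fromBlocks_zero_mul, toBlocks₁₁_vecMulVec]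
  rfl
end
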